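/- For all integers α ≥ 1 and n ≥ 0, p̄(3^{2α}·(3n+2)) ≡ 0 (mod 12). -/

import Mathlib

/-!
The identity of Gauss says that the generating function `P = ∑ p̄(n) qⁿ` is inverse to
`F = ∑_{k ∈ ℤ} (-1)^k q^(k²)`. It follows from a finite identity of Shanks type
(`shanks_identity`): with `Pₙ = ∏_{k ≤ n} (1 + q^k) / (1 - q^k)`,
`(∑_{|k| ≤ n} (-1)^k q^(k²)) Pₙ = ∑_{s ≤ n} (-1)^s aₛ q^(s(n+1))`, where `a₀ = 1` and
`aₛ = 2 Pₛ₋₁ / (1 - q^s)`; the right-hand side is `1` modulo `q^(n+1)`.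

Modulo 4: writing `F = 1 + 2S`, the relation `P F = 1` gives `P ≡ 1 - 2S`, so `4 ∣ p̄(n)` whenever
`n` is not a square, and `3^(2α) (3n+2)` is never a square.

Modulo 3: let `E` be the substitution `q ↦ q³` and `U` the operator extracting the coefficients with
index divisible by 3. Squares are `0` or `1` modulo 3, so `U F = E F` and `U (F²) = (E F)²`, and
`F³ ≡ E F`. Hence `P = F² P³ ≡ F² E(P)` yields in turn `U P ≡ F² E(F)`, `U² P ≡ F E(F²)` and
`U³ P ≡ F² E(F) ≡ U P`. The second series has no terms with exponent `2` modulo 3, which is the case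
`α = 1`, and the last relation, `p̄(27n) ≡ p̄(3n)`, gives the induction on `α`.
-/

open PowerSeries

/-- `pbar n` is the number of overpartitions of `n`: pairs `(μ, ν)` of partitions (multisets of
positive integers) with `|μ| + |ν| = n`, where `μ` has distinct parts. -/
noncomputable def pbar (n : ℕ) : ℕ :=
  Nat.card {p : Multiset ℕ × Multiset ℕ //
    p.1.Nodup ∧ (∀ i ∈ p.1, 0 < i) ∧ (∀ i ∈ p.2, 0 < i) ∧ p.1.sum + p.2.sum = n}

open Finset Filter Topology

/-! ### The finite form of the identity of Gauss -/

section Shanks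

variable {A : Type*} [CommRing A] (q : A) (g : ℕ → A)

/-- The product `∏_{k=1}^n (1 + q^k) / (1 - q^k)`, where `g i` stands for the
inverse of `1 - q^(i+1)`. -/
def overProd (n : ℕ) : A := ∏ i ∈ range n, (1 + q ^ (i + 1)) * g i

/-- The partial theta sum `∑_{|k| ≤ n} (-1)^k q^(k²)`. -/
def thetaSum (n : ℕ) : A := 1 + ∑ i ∈ range n, 2 * (-1) ^ (i + 1) * q ^ ((i + 1) ^ 2)

/-- The coefficients in the finite Gauss identity; morally `2 Pₛ / (1 + q^s)`. -/
def shanksCoeff : ℕ → A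
  | 0 => 1
  | s + 1 => 2 * overProd q g s * g s

/-- The telescoping behind the induction step of `shanks_identity`, which uses it with `n + 1` and
`n` in place of `n` and `m`. -/
lemma shanks_telescope (hg : ∀ i, (1 - q ^ (i + 1)) * g i = 1) (n m : ℕ) :
    ∑ s ∈ range (m + 1), (-1) ^ s * shanksCoeff q g s * q ^ (s * n) *
      ((1 - q ^ n) * q ^ s - (1 + q ^ n)) =
    -((-1) ^ m * q ^ ((m + 1) * n) * (2 * overProd q g m)) := by
  induction m with
  | zero => simp [shanksCoeff, overProd]; ring
  | succ m ih =>
    rw [sum_range_succ, ih]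
    have h : overProd q g (m + 1) = overProd q g m * ((1 + q ^ (m + 1)) * g m) :=
      prod_range_succ _ _
    simp only [h, shanksCoeff]
    linear_combination ((-1) ^ m * q ^ ((m + 1) * n) * 2 * overProd q g m) * hg m

theorem shanks_identity (hg : ∀ i, (1 - q ^ (i + 1)) * g i = 1) (n : ℕ) :
    thetaSum q n * overProd q g n =
      ∑ s ∈ range (n + 1), (-1) ^ s * shanksCoeff q g s * q ^ (s * (n + 1)) := by
  induction n with
  | zero => simp [thetaSum, overProd, shanksCoeff]
  | succ n ih =>
    have hP : overProd q g (n + 1) = overProd q g n * ((1 + q ^ (n + 1)) * g n) :=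
      prod_range_succ _ _
    have hS : thetaSum q (n + 1) =
        thetaSum q n + 2 * (-1) ^ (n + 1) * q ^ ((n + 1) ^ 2) := by
      simp [thetaSum, sum_range_succ, add_assoc]
    have ht := shanks_telescope q g hg (n + 1) n
    have e : ∑ s ∈ range (n + 1), (-1) ^ s * shanksCoeff q g s * q ^ (s * (n + 1)) *
        ((1 - q ^ (n + 1)) * q ^ s - (1 + q ^ (n + 1))) =
        (1 - q ^ (n + 1)) *
          ∑ s ∈ range (n + 1), (-1) ^ s * shanksCoeff q g s * q ^ (s * (n + 1 + 1)) -
        (1 + q ^ (n + 1)) *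
          ∑ s ∈ range (n + 1), (-1) ^ s * shanksCoeff q g s * q ^ (s * (n + 1)) := by
      rw [mul_sum, mul_sum, ← sum_sub_distrib]
      exact sum_congr rfl fun s _ => by ring
    rw [e, ← ih] at ht
    rw [sum_range_succ, hP, hS]
    have ha : shanksCoeff q g (n + 1) = 2 * overProd q g n * g n := rfl
    rw [ha]
    generalize ∑ s ∈ range (n + 1), (-1) ^ s * shanksCoeff q g s * q ^ (s * (n + 1 + 1)) = T at *
    linear_combination (-g n) * ht + T * hg n

end Shanks

/-! ### Generating functions -/

/-- The theta series `∑_{k ∈ ℤ} (-1)^k q^(k²)`; the sign is `(-1)^n` at `n = k²` since `k² ≡ k`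
modulo 2. -/
noncomputable def theta : ℤ⟦X⟧ :=
  PowerSeries.mk fun n => if n = 0 then 1 else if IsSquare n then 2 * (-1) ^ n else 0

/-- The generating function of overpartitions. -/
noncomputable def overGF : ℤ⟦X⟧ := PowerSeries.mk fun n => (pbar n : ℤ)

lemma pbar_eq_sum (n : ℕ) : pbar n = ∑ x ∈ antidiagonal n,
    #(Nat.Partition.countRestricted x.1 2) * #(Nat.Partition.restricted x.2 fun _ => True) := by
  classical
  simp only [Nat.Partition.countRestricted_two]
  let f : (Σ x : antidiagonal n, {p // p ∈ Nat.Partition.distincts x.1.1} ×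
      {p // p ∈ Nat.Partition.restricted x.1.2 fun _ => True}) →
      {p : Multiset ℕ × Multiset ℕ //
        p.1.Nodup ∧ (∀ i ∈ p.1, 0 < i) ∧ (∀ i ∈ p.2, 0 < i) ∧ p.1.sum + p.2.sum = n} :=
    fun y => ⟨(y.2.1.1.parts, y.2.2.1.parts), (mem_filter.1 y.2.1.2).2,
      fun i hi => y.2.1.1.parts_pos hi, fun i hi => y.2.2.1.parts_pos hi, by
      have := y.1.2
      rw [HasAntidiagonal.mem_antidiagonal] at this
      simp only [Nat.Partition.parts_sum]
      exact this⟩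
  have hf : Function.Bijective f := by
    constructor
    · rintro ⟨⟨⟨i, j⟩, h⟩, ⟨⟨μ, hμ, hi⟩, hμ'⟩, ⟨⟨ν, hν, hj⟩, hν'⟩⟩
        ⟨⟨⟨i', j'⟩, h'⟩, ⟨⟨μ', hm, hi'⟩, hm'⟩, ⟨⟨ν', hn, hj'⟩, hn'⟩⟩ hh
      simp only [f, Subtype.mk.injEq, Prod.mk.injEq] at hh
      obtain ⟨rfl, rfl⟩ := hh
      dsimp only at hi hi' hj hj'
      subst hi hj hi' hj'
      rfl
    · rintro ⟨⟨μ, ν⟩, h1, h2, h3, h4⟩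
      exact ⟨⟨⟨(μ.sum, ν.sum), by simpa using h4⟩,
        ⟨⟨μ, fun {i} hi => h2 i hi, rfl⟩, by simpa [Nat.Partition.distincts] using h1⟩,
        ⟨⟨ν, fun {i} hi => h3 i hi, rfl⟩, by simp [Nat.Partition.restricted]⟩⟩, rfl⟩
  rw [pbar, ← Nat.card_congr (Equiv.ofBijective f hf), Nat.card_eq_fintype_card,
    Fintype.card_sigma, ← Finset.sum_coe_sort (antidiagonal n)]
  simp

open PowerSeries.WithPiTopology in
/-- The identity of Gauss, obtained from `shanks_identity` as `n → ∞`. -/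
theorem overGF_mul_theta : overGF * theta = 1 := by
  let g : ℕ → ℤ⟦X⟧ := fun i => ∑' j : ℕ, X ^ ((i + 1) * j)
  have hg : ∀ i, (1 - (X : ℤ⟦X⟧) ^ (i + 1)) * g i = 1 := by
    intro i
    simp only [g, pow_mul]
    exact one_sub_mul_tsum_pow_of_constantCoeff_eq_zero (by simp)
  have hprod : HasProd (fun i => (1 + (X : ℤ⟦X⟧) ^ (i + 1)) * g i) overGF := by
    have h1 := Nat.Partition.hasProd_powerSeriesMk_card_countRestricted ℤ (m := 2) (by norm_num)
    have h2 := Nat.Partition.hasProd_powerSeriesMk_card_restricted ℤ fun _ => True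
    have e1 : (fun i => (1 + (X : ℤ⟦X⟧) ^ (i + 1)) * g i) = fun i =>
        (∑ j ∈ range 2, X ^ ((i + 1) * j)) * if True then ∑' j : ℕ, X ^ ((i + 1) * j) else 1 := by
      ext1 i
      rw [sum_range_succ, sum_range_one, if_pos trivial, mul_zero, mul_one, pow_zero]
    have e2 : overGF = (PowerSeries.mk fun n => (#(Nat.Partition.countRestricted n 2) : ℤ)) *
        PowerSeries.mk fun n => (#(Nat.Partition.restricted n fun _ => True) : ℤ) := by
      ext n
      simp only [overGF, pbar_eq_sum, coeff_mul, coeff_mk]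
      push_cast
      rfl
    rw [e1, e2]
    exact h1.mul h2
  have hP : Tendsto (fun n => overProd (X : ℤ⟦X⟧) g n) atTop (𝓝 overGF) :=
    hprod.tendsto_prod_nat
  have hS : Tendsto (fun n => thetaSum (X : ℤ⟦X⟧) n) atTop (𝓝 theta) := by
    rw [tendsto_iff_coeff_tendsto]
    intro d
    refine tendsto_const_nhds.congr' ?_
    filter_upwards [eventually_ge_atTop d] with n hn
    have key : ∀ i, coeff d (2 * (-1) ^ (i + 1) * (X : ℤ⟦X⟧) ^ ((i + 1) ^ 2)) =
        if d = (i + 1) ^ 2 then 2 * (-1) ^ (i + 1) else 0 := by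
      intro i
      have : (2 * (-1) ^ (i + 1) * (X : ℤ⟦X⟧) ^ ((i + 1) ^ 2)) =
          C (2 * (-1) ^ (i + 1) : ℤ) * X ^ ((i + 1) ^ 2) := by simp
      rw [this, coeff_C_mul, coeff_X_pow]
      split_ifs <;> simp
    simp only [theta, coeff_mk, thetaSum, map_add, map_sum, key, coeff_one]
    split_ifs with h0 hsq
    · subst h0
      rw [sum_eq_zero]
      · simp
      · intro i _
        rw [if_neg (by positivity)]
    · obtain ⟨k, rfl⟩ := hsq
      obtain ⟨k, rfl⟩ : ∃ m, k = m + 1 := Nat.exists_eq_succ_of_ne_zero (by rintro rfl; simp at h0)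
      rw [sum_eq_single k]
      · rw [if_pos (by ring)]
        simp [pow_mul, zero_add]
        rcases neg_one_pow_eq_or ℤ k with h | h <;> simp [pow_succ, h]
      · intro b _ hb
        rw [if_neg]
        intro h
        apply hb
        have : k + 1 = b + 1 := by nlinarith
        omega
      · intro h
        exfalso
        apply h
        rw [mem_range]
        nlinarith
    · rw [sum_eq_zero]
      · simp
      · intro i _
        rw [if_neg]
        rintro rfl
        exact hsq ⟨i + 1, by ring⟩
  have h1 : Tendsto (fun n => thetaSum (X : ℤ⟦X⟧) n * overProd X g n) atTop (𝓝 1) := by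
    rw [tendsto_iff_coeff_tendsto]
    intro d
    refine tendsto_const_nhds.congr' ?_
    filter_upwards [eventually_ge_atTop d] with n hn
    rw [shanks_identity X g hg, sum_range_succ', map_add, map_sum, sum_eq_zero]
    · simp [shanksCoeff]
    · intro s _
      rw [coeff_mul_X_pow', if_neg]
      nlinarith
  rw [mul_comm]
  exact tendsto_nhds_unique (hS.mul hP) h1

/-! ### The congruence modulo 4 -/

lemma four_dvd_pbar {n : ℕ} (hn : ¬ IsSquare n) : (4 : ℤ) ∣ pbar n := by
  let S : ℤ⟦X⟧ := PowerSeries.mk fun n => if n = 0 then 0 else if IsSquare n then (-1) ^ n else 0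
  have hS : theta = 1 + C 2 * S := by
    ext d
    simp only [theta, S, coeff_mk, map_add, coeff_one, coeff_C_mul]
    split_ifs <;> simp
  have h := overGF_mul_theta
  rw [hS] at h
  have h2 : overGF = 1 - C 2 * S + C 4 * (overGF * S ^ 2) := by
    have : (C 4 : ℤ⟦X⟧) = C 2 * C 2 := by rw [← map_mul]; norm_num
    rw [this]
    linear_combination (1 - C 2 * S) * h
  have h3 := congrArg (coeff n) h2
  have hn0 : n ≠ 0 := by rintro rfl; exact hn ⟨0, rfl⟩
  simp only [overGF, S, coeff_mk, map_add, map_sub, coeff_one, coeff_C_mul, hn0, hn,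
    if_false] at h3
  exact ⟨_, by rw [h3]; ring⟩

/-! ### The congruence modulo 3 -/

/-- The operator `∑ aₙ qⁿ ↦ ∑ a₃ₙ qⁿ`. -/
noncomputable def extract3 (f : (ZMod 3)⟦X⟧) : (ZMod 3)⟦X⟧ :=
  PowerSeries.mk fun n => coeff (3 * n) f

/-- `extract3` is multiplicative when no pair of indices prime to 3 contributes. -/
lemma extract3_mul (f h : (ZMod 3)⟦X⟧)
    (H : ∀ i j, 3 ∣ i + j → ¬ 3 ∣ i → coeff i f * coeff j h = 0) :
    extract3 (f * h) = extract3 f * extract3 h := by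
  ext n
  simp only [extract3, coeff_mk, coeff_mul]
  symm
  refine sum_of_injOn (fun x => (3 * x.1, 3 * x.2)) ?_ ?_ ?_ ?_
  · rintro ⟨a, b⟩ _ ⟨c, d⟩ _ hh
    simp only [Prod.mk.injEq] at hh ⊢
    omega
  · rintro ⟨a, b⟩ hx
    simp only [mem_coe, HasAntidiagonal.mem_antidiagonal] at hx ⊢
    omega
  · rintro ⟨a, b⟩ hx hx'
    rw [HasAntidiagonal.mem_antidiagonal] at hx
    refine H a b ⟨n, hx⟩ ?_
    rintro ⟨c, rfl⟩
    apply hx'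
    refine ⟨(c, n - c), ?_, ?_⟩
    · simp only [mem_coe, HasAntidiagonal.mem_antidiagonal]
      omega
    · simp only [Prod.mk.injEq, true_and]
      omega
  · intro x _
    rfl

/-- The substitution `q ↦ q³`. -/
noncomputable abbrev sub3 (f : (ZMod 3)⟦X⟧) : (ZMod 3)⟦X⟧ := expand 3 three_ne_zero f

lemma extract3_sub3_mul (f h : (ZMod 3)⟦X⟧) :
    extract3 (sub3 f * h) = f * extract3 h := by
  rw [extract3_mul]
  · congr 1
    ext n
    simp [extract3]
  · intro i j _ hi
    rw [coeff_expand_of_not_dvd _ _ _ hi, zero_mul]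

lemma sub3_eq_cube (f : (ZMod 3)⟦X⟧) : sub3 f = f ^ 3 := by
  have : Fact (Nat.Prime 3) := ⟨Nat.prime_three⟩
  have h := MvPowerSeries.map_frobenius_expand (R := ZMod 3) 3 three_ne_zero
    (f := (f : MvPowerSeries Unit (ZMod 3)))
  rw [ZMod.frobenius_zmod, MvPowerSeries.map_id] at h
  exact h

/-- The reduction of `theta` modulo 3. -/
noncomputable def theta3 : (ZMod 3)⟦X⟧ := PowerSeries.map (Int.castRingHom (ZMod 3)) theta

/-- The reduction of `overGF` modulo 3. -/
noncomputable def over3 : (ZMod 3)⟦X⟧ := PowerSeries.map (Int.castRingHom (ZMod 3)) overGF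

lemma over3_mul_theta3 : over3 * theta3 = 1 := by
  rw [over3, theta3, ← map_mul, overGF_mul_theta, map_one]

lemma not_isSquare_of_mod_three {n : ℕ} (h : n % 3 = 2) : ¬ IsSquare n := by
  rintro ⟨k, rfl⟩
  have : k % 3 = 0 ∨ k % 3 = 1 ∨ k % 3 = 2 := by omega
  rcases this with h' | h' | h' <;> simp [Nat.mul_mod, h'] at h

lemma coeff_theta3_eq_zero {n : ℕ} (h : n % 3 = 2) : coeff n theta3 = 0 := by
  have h0 : n ≠ 0 := by rintro rfl; simp at h
  simp [theta3, theta, h0, not_isSquare_of_mod_three h]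

lemma extract3_theta3 : extract3 theta3 = sub3 theta3 := by
  ext n
  by_cases h : 3 ∣ n
  · obtain ⟨m, rfl⟩ := h
    have hs : IsSquare (3 * (3 * m)) ↔ IsSquare m := by
      constructor
      · rintro ⟨k, hk⟩
        obtain ⟨l, rfl⟩ : 3 ∣ k := by
          have : 3 ∣ k * k := ⟨3 * m, hk.symm⟩
          exact (Nat.prime_three.dvd_mul.1 this).elim id id
        exact ⟨l, by nlinarith⟩
      · rintro ⟨l, rfl⟩
        exact ⟨3 * l, by ring⟩
    have hp : ((-1 : ZMod 3)) ^ (3 * (3 * m)) = (-1) ^ m := by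
      rw [← mul_assoc, pow_mul]
      norm_num
    simp only [extract3, theta3, theta, coeff_mk, coeff_map, coeff_expand_mul, hs,
      mul_eq_zero, three_ne_zero, false_or]
    split_ifs <;> simp [hp]
  · rw [sub3, coeff_expand_of_not_dvd _ _ _ h]
    have hs : ¬ IsSquare (3 * n) := by
      rintro ⟨k, hk⟩
      obtain ⟨l, rfl⟩ : 3 ∣ k := by
        have : 3 ∣ k * k := ⟨n, hk.symm⟩
        exact (Nat.prime_three.dvd_mul.1 this).elim id id
      exact h ⟨l * l, by nlinarith⟩
    have h0 : n ≠ 0 := by rintro rfl; simp at h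
    simp [extract3, theta3, theta, hs, h0]

/-- Squares are `0` or `1` modulo 3, so a sum of two squares divisible by 3 has both squares
divisible by 3. -/
lemma extract3_theta3_sq : extract3 (theta3 ^ 2) = sub3 theta3 ^ 2 := by
  rw [sq, extract3_mul, extract3_theta3, sq]
  intro i j hij hi
  have : i % 3 = 2 ∨ j % 3 = 2 := by omega
  rcases this with h | h <;> simp [coeff_theta3_eq_zero h]

lemma extract3_over3 : extract3 over3 = sub3 theta3 * theta3 ^ 2 := by
  have h := over3_mul_theta3
  have e : over3 = sub3 over3 * theta3 ^ 2 := by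
    rw [sub3_eq_cube]
    linear_combination (-over3 * (over3 * theta3 + 1)) * h
  rw [e, extract3_sub3_mul, extract3_theta3_sq, sub3_eq_cube]
  linear_combination theta3 ^ 5 * h

lemma extract3_extract3_over3 : extract3 (extract3 over3) = sub3 (theta3 ^ 2) * theta3 := by
  rw [extract3_over3, extract3_sub3_mul, extract3_theta3_sq, sub3_eq_cube, sub3_eq_cube]
  ring

lemma extract3_pow_three_over3 : extract3 (extract3 (extract3 over3)) = extract3 over3 := by
  rw [extract3_extract3_over3, extract3_sub3_mul, extract3_theta3, extract3_over3, mul_comm]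

lemma coeff_over3 (n : ℕ) : coeff n over3 = (pbar n : ZMod 3) := by
  simp [over3, overGF]

lemma pbar_mod_three_base (n : ℕ) : (pbar (9 * (3 * n + 2)) : ZMod 3) = 0 := by
  have h := congrArg (coeff (3 * n + 2)) extract3_extract3_over3
  simp only [extract3, coeff_mk, ← mul_assoc, coeff_over3] at h
  rw [show 9 = 3 * 3 from rfl, h, coeff_mul]
  refine sum_eq_zero ?_
  rintro ⟨i, j⟩ hij
  rw [HasAntidiagonal.mem_antidiagonal] at hij
  by_cases hi : 3 ∣ i
  · rw [coeff_theta3_eq_zero (n := j) (by simp only at hij; omega), mul_zero]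
  · rw [coeff_expand_of_not_dvd _ _ _ hi, zero_mul]

lemma pbar_mod_three_step (n : ℕ) : (pbar (27 * n) : ZMod 3) = pbar (3 * n) := by
  have h := congrArg (coeff n) extract3_pow_three_over3
  simp only [extract3, coeff_mk, ← mul_assoc, coeff_over3] at h
  norm_num at h
  exact h

lemma pbar_mod_three (α n : ℕ) : (pbar (3 ^ (2 * (α + 1)) * (3 * n + 2)) : ZMod 3) = 0 := by
  induction α with
  | zero => simpa using pbar_mod_three_base n
  | succ α ih =>
    rw [← ih, show 3 ^ (2 * (α + 1 + 1)) * (3 * n + 2) =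
      27 * (3 ^ (2 * α + 1) * (3 * n + 2)) by ring, pbar_mod_three_step]
    congr 2
    ring

theorem pbar_congruence_family (α n : ℕ) (hα : 1 ≤ α) :
    pbar (3 ^ (2 * α) * (3 * n + 2)) ≡ 0 [MOD 12] := by
  obtain ⟨β, rfl⟩ : ∃ β, α = β + 1 := ⟨α - 1, by omega⟩
  rw [Nat.modEq_zero_iff_dvd]
  have h3 : 3 ∣ pbar (3 ^ (2 * (β + 1)) * (3 * n + 2)) :=
    (ZMod.natCast_eq_zero_iff _ _).1 (pbar_mod_three β n)
  have h4 : 4 ∣ pbar (3 ^ (2 * (β + 1)) * (3 * n + 2)) := by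
    have : ¬ IsSquare (3 ^ (2 * (β + 1)) * (3 * n + 2)) := by
      rintro ⟨k, hk⟩
      obtain ⟨l, rfl⟩ : 3 ^ (β + 1) ∣ k := by
        rw [← Nat.pow_dvd_pow_iff two_ne_zero]
        exact ⟨3 * n + 2, by rw [← pow_mul, mul_comm (β + 1), hk, sq]⟩
      refine not_isSquare_of_mod_three (n := 3 * n + 2) (by omega) ⟨l, ?_⟩
      have hpos : 0 < 3 ^ (2 * (β + 1)) := by positivity
      refine Nat.eq_of_mul_eq_mul_left hpos (hk.trans ?_)
      ring
    exact_mod_cast four_dvd_pbar this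
  omega
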